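/- Let G be a bounded measurable subset of ℝ² with finite Lebesgue measure |G|. Let u, v : ℝ² → ℝ² be smooth compactly supported vector fields with supports contained in G, and assume div v = 0 everywhere. Then |𝔞(u,u,u−v) − 𝔞(v,v,u−v)| ≤ (√|G|/2) · |u−v|_{1,2}² · |u|_{1,2}. -/

import Mathlib

open MeasureTheory

/-- Partial derivative `∂f/∂x_j` of a scalar field on `ℝ²`. -/
noncomputable def pd (f : EuclideanSpace ℝ (Fin 2) → ℝ) (j : Fin 2)
    (x : EuclideanSpace ℝ (Fin 2)) : ℝ :=
  fderiv ℝ f x (EuclideanSpace.single j 1)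

/-- The Dirichlet (gradient `L²`) norm `|u|_{1,2}` of a vector field on `ℝ²`. -/
noncomputable def dirichletNorm (u : EuclideanSpace ℝ (Fin 2) → Fin 2 → ℝ) : ℝ :=
  Real.sqrt (∫ x, ∑ i : Fin 2, ∑ j : Fin 2, (pd (fun y => u y i) j x) ^ 2)

/-- Divergence `div u = ∂u¹/∂x₁ + ∂u²/∂x₂` of a vector field on `ℝ²`. -/
noncomputable def divergence (u : EuclideanSpace ℝ (Fin 2) → Fin 2 → ℝ)
    (x : EuclideanSpace ℝ (Fin 2)) : ℝ :=
  ∑ j : Fin 2, pd (fun y => u y j) j x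

/-- The trilinear form `𝔞(u,v,w) = ∫ Σ_{i,j} uʲ ∂vⁱ/∂x_j wⁱ dx`. -/
noncomputable def triFormA (u v w : EuclideanSpace ℝ (Fin 2) → Fin 2 → ℝ) : ℝ :=
  ∫ x, ∑ i : Fin 2, ∑ j : Fin 2, u x j * pd (fun y => v y i) j x * w x i

/-!
Write `w = u - v`. By trilinearity `𝔞(u,u,w) - 𝔞(v,v,w) = 𝔞(w,u,w) + 𝔞(v,w,w)`, and the last term is
`-½ ∫ (div v) |w|² = 0`. Cauchy–Schwarz, first pointwise and then in `L²`, gives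
`|𝔞(w,u,w)| ≤ (∫ |w|⁴)^{1/2} |u|_{1,2}`.

The fourth moment is controlled by the planar inequality `∫ |g|² ≤ ¼ ∫ |∂₁g| ∫ |∂₂g|`, used twice:
with `g = |w|²` it is Ladyzhenskaya's inequality `∫ |w|⁴ ≤ ∫ |w|² ‖∂₁w‖₂ ‖∂₂w‖₂`, and with `g = w`,
followed by Cauchy–Schwarz on the support, it is the Poincaré inequality
`∫ |w|² ≤ ¼ |G| ‖∂₁w‖₂ ‖∂₂w‖₂`. Together with `4ab ≤ (a + b)²` they yield
`∫ |w|⁴ ≤ |G| |w|_{1,2}⁴ / 16`.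
-/

section Analysis

variable {F : Type*} [NormedAddCommGroup F] [NormedSpace ℝ F]

theorem norm_le_half_integral_norm_deriv [CompleteSpace F] {g : ℝ → F} (hg : ContDiff ℝ 1 g)
    (hc : HasCompactSupport g) (x : ℝ) : ‖g x‖ ≤ 1 / 2 * ∫ t, ‖deriv g t‖ := by
  have hint : Integrable fun t => ‖deriv g t‖ :=
    ((hg.continuous_deriv le_rfl).integrable_of_hasCompactSupport hc.deriv).norm
  have hleft : ‖g x‖ ≤ ∫ t in Set.Iic x, ‖deriv g t‖ := by
    rw [← hc.integral_Iic_deriv_eq hg x]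
    exact norm_integral_le_integral_norm _
  have hright : ‖g x‖ ≤ ∫ t in Set.Ioi x, ‖deriv g t‖ := by
    rw [← norm_neg, ← hc.integral_Ioi_deriv_eq hg x]
    exact norm_integral_le_integral_norm _
  have hsplit := intervalIntegral.integral_Iic_add_Ioi (b := x) hint.integrableOn hint.integrableOn
  linarith

theorem norm_comp_le_half_integral_norm_fderiv [CompleteSpace F] {E : Type*}
    [NormedAddCommGroup E] [NormedSpace ℝ E] {f : E → F} (hf : ContDiff ℝ 1 f)
    (hc : HasCompactSupport f) {γ : ℝ → E} (hγ : ContDiff ℝ 1 γ)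
    (hγc : Topology.IsClosedEmbedding γ) (s : ℝ) :
    ‖f (γ s)‖ ≤ 1 / 2 * ∫ t, ‖fderiv ℝ f (γ t) (deriv γ t)‖ := by
  have hderiv (t : ℝ) : deriv (f ∘ γ) t = fderiv ℝ f (γ t) (deriv γ t) :=
    fderiv_comp_deriv t (hf.differentiable one_ne_zero _) (hγ.differentiable one_ne_zero _)
  simpa only [hderiv, Function.comp_apply] using
    norm_le_half_integral_norm_deriv (hf.comp hγ) (hc.comp_isClosedEmbedding hγc) s

theorem memLp_fderiv_apply {E : Type*} [NormedAddCommGroup E] [NormedSpace ℝ E]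
    [MeasurableSpace E] [OpensMeasurableSpace E] {μ : Measure E} [IsFiniteMeasureOnCompacts μ]
    {f : E → F} (hf : ContDiff ℝ 1 f) (hc : HasCompactSupport f) (p : ENNReal) (e : E) :
    MemLp (fun x => fderiv ℝ f x e) p μ :=
  ((hf.continuous_fderiv one_ne_zero).clm_apply continuous_const).memLp_of_hasCompactSupport
    (hc.fderiv_apply ℝ e)

/-- The one-dimensional bound on horizontal lines does not depend on the abscissa, the one on
vertical lines not on the ordinate, so their product integrates by Tonelli. -/
theorem integral_norm_sq_le_integral_norm_fderiv_prod [CompleteSpace F] {f : ℝ × ℝ → F}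
    (hf : ContDiff ℝ 1 f) (hc : HasCompactSupport f) :
    ∫ p, ‖f p‖ ^ 2 ≤
      1 / 4 * ((∫ p, ‖fderiv ℝ f p (1, 0)‖) * ∫ p, ‖fderiv ℝ f p (0, 1)‖) := by
  set A : ℝ → ℝ := fun y => ∫ t, ‖fderiv ℝ f (t, y) (1, 0)‖
  set B : ℝ → ℝ := fun x => ∫ t, ‖fderiv ℝ f (x, t) (0, 1)‖
  have hint (e : ℝ × ℝ) : Integrable (fun p => ‖fderiv ℝ f p e‖) (volume.prod volume) :=
    (memLp_one_iff_integrable.1 (memLp_fderiv_apply hf hc 1 e)).norm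
  have hhor (x y : ℝ) : ‖f (x, y)‖ ≤ 1 / 2 * A y := by
    have hγ (t : ℝ) : deriv (fun s : ℝ => (s, y)) t = (1, 0) :=
      ((hasDerivAt_id t).prodMk (hasDerivAt_const t y)).deriv
    simpa only [hγ] using norm_comp_le_half_integral_norm_fderiv hf hc
      (γ := fun t => (t, y)) (by fun_prop)
      (Isometry.of_dist_eq fun s t => by simp [Prod.dist_eq]).isClosedEmbedding x
  have hver (x y : ℝ) : ‖f (x, y)‖ ≤ 1 / 2 * B x := by
    have hγ (t : ℝ) : deriv (fun s : ℝ => (x, s)) t = (0, 1) :=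
      ((hasDerivAt_const t x).prodMk (hasDerivAt_id t)).deriv
    simpa only [hγ] using norm_comp_le_half_integral_norm_fderiv hf hc
      (γ := fun t => (x, t)) (by fun_prop)
      (Isometry.of_dist_eq fun s t => by simp [Prod.dist_eq]).isClosedEmbedding y
  have hsq : Integrable fun p => ‖f p‖ ^ 2 :=
    (hf.continuous.memLp_of_hasCompactSupport hc).integrable_norm_pow two_ne_zero
  calc ∫ p, ‖f p‖ ^ 2
      ≤ ∫ p : ℝ × ℝ, 1 / 4 * (B p.1 * A p.2) := by
        refine integral_mono hsq
          (((hint _).integral_prod_left.mul_prod (hint _).integral_prod_right).const_mul _) ?_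
        rintro ⟨x, y⟩
        nlinarith [mul_le_mul (hver x y) (hhor x y) (norm_nonneg _)
          ((norm_nonneg _).trans (hver x y))]
    _ = 1 / 4 * ((∫ x, B x) * ∫ y, A y) := by
        rw [integral_const_mul, Measure.volume_eq_prod, integral_prod_mul]
    _ = 1 / 4 * ((∫ p, ‖fderiv ℝ f p (1, 0)‖) * ∫ p, ‖fderiv ℝ f p (0, 1)‖) := by
        rw [Measure.volume_eq_prod, integral_prod_symm _ (hint (1, 0)),
          integral_prod _ (hint (0, 1)), mul_comm (∫ x, B x)]

theorem integral_norm_sq_le_integral_norm_fderiv [CompleteSpace F]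
    {f : EuclideanSpace ℝ (Fin 2) → F} (hf : ContDiff ℝ 1 f) (hc : HasCompactSupport f) :
    ∫ x, ‖f x‖ ^ 2 ≤ 1 / 4 * ((∫ x, ‖fderiv ℝ f x (EuclideanSpace.single 0 1)‖) *
      ∫ x, ‖fderiv ℝ f x (EuclideanSpace.single 1 1)‖) := by
  let φ : (ℝ × ℝ) ≃L[ℝ] EuclideanSpace ℝ (Fin 2) :=
    ((EuclideanSpace.equiv (Fin 2) ℝ).trans (ContinuousLinearEquiv.finTwoArrow ℝ ℝ)).symm
  have hφ : MeasurePreserving φ :=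
    (PiLp.volume_preserving_toLp (Fin 2)).comp (volume_preserving_finTwoArrow ℝ).symm
  have hcomp (g : EuclideanSpace ℝ (Fin 2) → ℝ) : ∫ p, g (φ p) = ∫ x, g x :=
    hφ.integral_comp φ.toHomeomorph.measurableEmbedding g
  have hfderiv (p e : ℝ × ℝ) : fderiv ℝ (f ∘ φ) p e = fderiv ℝ f (φ p) (φ e) := by
    rw [φ.comp_right_fderiv]
    rfl
  have hφ₀ : φ (1, 0) = EuclideanSpace.single 0 1 := by
    ext i; fin_cases i <;> simp [φ]
  have hφ₁ : φ (0, 1) = EuclideanSpace.single 1 1 := by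
    ext i; fin_cases i <;> simp [φ]
  have h := integral_norm_sq_le_integral_norm_fderiv_prod (hf.comp φ.contDiff)
    (hc.comp_homeomorph φ.toHomeomorph)
  simp only [hfderiv, hφ₀, hφ₁] at h
  rwa [← hcomp, ← hcomp, ← hcomp]

end Analysis

section CauchySchwarz

variable {α E F : Type*} [MeasurableSpace α] {μ : Measure α} [NormedAddCommGroup E]
  [NormedAddCommGroup F]

theorem integral_norm_mul_norm_le_sqrt_mul_sqrt {f : α → E} {g : α → F} (hf : MemLp f 2 μ)
    (hg : MemLp g 2 μ) :
    ∫ x, ‖f x‖ * ‖g x‖ ∂μ ≤ √(∫ x, ‖f x‖ ^ 2 ∂μ) * √(∫ x, ‖g x‖ ^ 2 ∂μ) := by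
  have h := integral_mul_norm_le_Lp_mul_Lq Real.HolderConjugate.two_two
    (by simpa using hf.norm) (by simpa using hg.norm)
  simpa [Real.sqrt_eq_rpow] using h

theorem integral_norm_le_sqrt_measureReal_mul_sqrt {g : α → F} {s : Set α} (hg : MemLp g 2 μ)
    (hs : μ s ≠ ⊤) (hsupp : Function.support g ⊆ s) :
    ∫ x, ‖g x‖ ∂μ ≤ √(μ.real s) * √(∫ x, ‖g x‖ ^ 2 ∂μ) := by
  have hzero : ∀ x ∉ s, g x = 0 := fun x hx => Function.notMem_support.1 fun h => hx (hsupp h)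
  have : IsFiniteMeasure (μ.restrict s) := isFiniteMeasure_restrict.2 hs
  rw [← setIntegral_eq_integral_of_forall_compl_eq_zero (s := s) (f := fun x => ‖g x‖)
      (by simpa using hzero),
    ← setIntegral_eq_integral_of_forall_compl_eq_zero (s := s) (f := fun x => ‖g x‖ ^ 2)
      (by simpa using hzero)]
  simpa using integral_norm_mul_norm_le_sqrt_mul_sqrt (memLp_const (1 : ℝ)) (hg.restrict s)

end CauchySchwarz

section Ladyzhenskaya

variable {F : Type*} [NormedAddCommGroup F] {f : EuclideanSpace ℝ (Fin 2) → F}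

theorem integral_norm_sq_le_measureReal_mul [NormedSpace ℝ F] [CompleteSpace F]
    (hf : ContDiff ℝ 1 f) (hc : HasCompactSupport f) {s : Set (EuclideanSpace ℝ (Fin 2))}
    (hs : volume s ≠ ⊤) (hsupp : tsupport f ⊆ s) :
    ∫ x, ‖f x‖ ^ 2 ≤ volume.real s / 4 *
      (√(∫ x, ‖fderiv ℝ f x (EuclideanSpace.single 0 1)‖ ^ 2) *
        √(∫ x, ‖fderiv ℝ f x (EuclideanSpace.single 1 1)‖ ^ 2)) := by
  have hL1 (e : EuclideanSpace ℝ (Fin 2)) :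
      ∫ x, ‖fderiv ℝ f x e‖ ≤ √(volume.real s) * √(∫ x, ‖fderiv ℝ f x e‖ ^ 2) :=
    integral_norm_le_sqrt_measureReal_mul_sqrt (memLp_fderiv_apply hf hc 2 e) hs
      ((subset_tsupport _).trans ((tsupport_fderiv_apply_subset ℝ e).trans hsupp))
  have hsqrt : √(volume.real s) * √(volume.real s) = volume.real s :=
    Real.mul_self_sqrt measureReal_nonneg
  calc ∫ x, ‖f x‖ ^ 2
      ≤ 1 / 4 * ((∫ x, ‖fderiv ℝ f x (EuclideanSpace.single 0 1)‖) *
          ∫ x, ‖fderiv ℝ f x (EuclideanSpace.single 1 1)‖) :=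
        integral_norm_sq_le_integral_norm_fderiv hf hc
    _ ≤ 1 / 4 *
          ((√(volume.real s) * √(∫ x, ‖fderiv ℝ f x (EuclideanSpace.single 0 1)‖ ^ 2)) *
            (√(volume.real s) * √(∫ x, ‖fderiv ℝ f x (EuclideanSpace.single 1 1)‖ ^ 2))) := by
        gcongr <;> exact hL1 _
    _ = _ := by
        linear_combination 1 / 4 *
          (√(∫ x, ‖fderiv ℝ f x (EuclideanSpace.single 0 1)‖ ^ 2) *
            √(∫ x, ‖fderiv ℝ f x (EuclideanSpace.single 1 1)‖ ^ 2)) * hsqrt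

variable [InnerProductSpace ℝ F]

theorem integral_norm_fderiv_norm_sq_le {E : Type*} [NormedAddCommGroup E] [NormedSpace ℝ E]
    [MeasurableSpace E] [OpensMeasurableSpace E] {μ : Measure E} [IsFiniteMeasureOnCompacts μ]
    {f : E → F} (hf : ContDiff ℝ 1 f) (hc : HasCompactSupport f) (e : E) :
    ∫ x, ‖fderiv ℝ (fun y => ‖f y‖ ^ 2) x e‖ ∂μ ≤
      2 * (√(∫ x, ‖f x‖ ^ 2 ∂μ) * √(∫ x, ‖fderiv ℝ f x e‖ ^ 2 ∂μ)) := by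
  have hf₂ : MemLp f 2 μ := hf.continuous.memLp_of_hasCompactSupport hc
  have hf'₂ : MemLp (fun x => fderiv ℝ f x e) 2 μ := memLp_fderiv_apply hf hc 2 e
  have hpointwise (x : E) :
      ‖fderiv ℝ (fun y => ‖f y‖ ^ 2) x e‖ ≤ 2 * (‖f x‖ * ‖fderiv ℝ f x e‖) := by
    rw [(hf.differentiable one_ne_zero x).hasFDerivAt.norm_sq.fderiv]
    simpa using norm_inner_le_norm (𝕜 := ℝ) (f x) (fderiv ℝ f x e)
  calc ∫ x, ‖fderiv ℝ (fun y => ‖f y‖ ^ 2) x e‖ ∂μ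
      ≤ ∫ x, 2 * (‖f x‖ * ‖fderiv ℝ f x e‖) ∂μ :=
        integral_mono_of_nonneg (.of_forall fun x => norm_nonneg _)
          ((hf₂.norm.integrable_mul hf'₂.norm).const_mul 2) (.of_forall hpointwise)
    _ = 2 * ∫ x, ‖f x‖ * ‖fderiv ℝ f x e‖ ∂μ := integral_const_mul _ _
    _ ≤ 2 * (√(∫ x, ‖f x‖ ^ 2 ∂μ) * √(∫ x, ‖fderiv ℝ f x e‖ ^ 2 ∂μ)) := by
        gcongr
        exact integral_norm_mul_norm_le_sqrt_mul_sqrt hf₂ hf'₂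

theorem integral_norm_pow_four_le (hf : ContDiff ℝ 1 f) (hc : HasCompactSupport f) :
    ∫ x, ‖f x‖ ^ 4 ≤ (∫ x, ‖f x‖ ^ 2) *
      (√(∫ x, ‖fderiv ℝ f x (EuclideanSpace.single 0 1)‖ ^ 2) *
        √(∫ x, ‖fderiv ℝ f x (EuclideanSpace.single 1 1)‖ ^ 2)) := by
  set M := ∫ x, ‖f x‖ ^ 2
  have hM : √M * √M = M := Real.mul_self_sqrt (integral_nonneg fun x => by positivity)
  calc ∫ x, ‖f x‖ ^ 4
      = ∫ x, ‖‖f x‖ ^ 2‖ ^ 2 := by simp [← pow_mul]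
    _ ≤ 1 / 4 * ((∫ x, ‖fderiv ℝ (fun y => ‖f y‖ ^ 2) x (EuclideanSpace.single 0 1)‖) *
          ∫ x, ‖fderiv ℝ (fun y => ‖f y‖ ^ 2) x (EuclideanSpace.single 1 1)‖) :=
        integral_norm_sq_le_integral_norm_fderiv (hf.norm_sq ℝ)
          (hc.comp_left (g := fun z => ‖z‖ ^ 2) (by simp))
    _ ≤ 1 / 4 *
          ((2 * (√M * √(∫ x, ‖fderiv ℝ f x (EuclideanSpace.single 0 1)‖ ^ 2))) *
            (2 * (√M * √(∫ x, ‖fderiv ℝ f x (EuclideanSpace.single 1 1)‖ ^ 2)))) := by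
        gcongr <;> exact integral_norm_fderiv_norm_sq_le hf hc _
    _ = _ := by
        linear_combination
          √(∫ x, ‖fderiv ℝ f x (EuclideanSpace.single 0 1)‖ ^ 2) *
            √(∫ x, ‖fderiv ℝ f x (EuclideanSpace.single 1 1)‖ ^ 2) * hM

theorem integral_norm_pow_four_le_measureReal_mul [CompleteSpace F] (hf : ContDiff ℝ 1 f)
    (hc : HasCompactSupport f) {s : Set (EuclideanSpace ℝ (Fin 2))} (hs : volume s ≠ ⊤)
    (hsupp : tsupport f ⊆ s) :
    ∫ x, ‖f x‖ ^ 4 ≤ volume.real s / 16 *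
      (∑ j, ∫ x, ‖fderiv ℝ f x (EuclideanSpace.single j 1)‖ ^ 2) ^ 2 := by
  set D : Fin 2 → ℝ := fun j => ∫ x, ‖fderiv ℝ f x (EuclideanSpace.single j 1)‖ ^ 2
  have hsqrt (j : Fin 2) : √(D j) ^ 2 = D j :=
    Real.sq_sqrt (integral_nonneg fun x => by positivity)
  calc ∫ x, ‖f x‖ ^ 4
      ≤ (∫ x, ‖f x‖ ^ 2) * (√(D 0) * √(D 1)) := integral_norm_pow_four_le hf hc
    _ ≤ volume.real s / 4 * (√(D 0) * √(D 1)) * (√(D 0) * √(D 1)) := by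
        gcongr
        exact integral_norm_sq_le_measureReal_mul hf hc hs hsupp
    _ = volume.real s / 16 * (4 * D 0 * D 1) := by
        linear_combination volume.real s / 4 * (√(D 1) ^ 2 * hsqrt 0 + D 0 * hsqrt 1)
    _ ≤ volume.real s / 16 * (∑ j, D j) ^ 2 := by
        rw [Fin.sum_univ_two]
        gcongr
        exact four_mul_le_sq_add (D 0) (D 1)

end Ladyzhenskaya

section TrilinearForm

theorem continuous_pd {f : EuclideanSpace ℝ (Fin 2) → ℝ} (hf : ContDiff ℝ 1 f) (j : Fin 2) :
    Continuous (pd f j) :=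
  (hf.continuous_fderiv one_ne_zero).clm_apply continuous_const

theorem pd_sum_sq {ι : Type*} [Fintype ι] {f : ι → EuclideanSpace ℝ (Fin 2) → ℝ}
    {x : EuclideanSpace ℝ (Fin 2)} (hf : ∀ i, DifferentiableAt ℝ (f i) x) (j : Fin 2) :
    pd (fun y => ∑ i, f i y ^ 2) j x = 2 * ∑ i, f i x * pd (f i) j x := by
  have h := HasFDerivAt.fun_sum (u := Finset.univ) fun i _ => (hf i).hasFDerivAt.pow 2
  rw [pd, h.fderiv, sum_apply, Finset.mul_sum]
  simp [pd, mul_assoc]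

variable {u v w : EuclideanSpace ℝ (Fin 2) → Fin 2 → ℝ}

theorem integral_sum_mul_pd_eq_neg_integral_divergence_mul
    {g : EuclideanSpace ℝ (Fin 2) → ℝ} (hv : ContDiff ℝ 1 v) (hg : ContDiff ℝ 1 g)
    (hc : HasCompactSupport g) :
    ∫ x, ∑ j, v x j * pd g j x = -∫ x, divergence v x * g x := by
  have hvj := contDiff_pi.1 hv
  have hvg (j : Fin 2) : Integrable fun x => v x j * g x :=
    ((hvj j).continuous.mul hg.continuous).integrable_of_hasCompactSupport hc.mul_left
  have hvg' (j : Fin 2) : Integrable fun x => v x j * pd g j x :=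
    ((hvj j).continuous.mul (continuous_pd hg j)).integrable_of_hasCompactSupport
      (hc.fderiv_apply ℝ _).mul_left
  have hv'g (j : Fin 2) : Integrable fun x => pd (fun y => v y j) j x * g x :=
    ((continuous_pd (hvj j) j).mul hg.continuous).integrable_of_hasCompactSupport hc.mul_left
  have hparts (j : Fin 2) :
      ∫ x, v x j * pd g j x = -∫ x, pd (fun y => v y j) j x * g x :=
    integral_mul_fderiv_eq_neg_fderiv_mul_of_integrable (hv'g j) (hvg' j) (hvg j)
      (fun x _ => (hvj j).differentiable one_ne_zero x)
      fun x _ => hg.differentiable one_ne_zero x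
  simp only [divergence, Finset.sum_mul]
  rw [integral_finsetSum _ fun j _ => hvg' j, integral_finsetSum _ fun j _ => hv'g j,
    ← Finset.sum_neg_distrib]
  exact Finset.sum_congr rfl fun j _ => hparts j

theorem triFormA_self_eq_integral_divergence (hv : ContDiff ℝ 1 v) (hw : ContDiff ℝ 1 w)
    (hc : HasCompactSupport w) :
    triFormA v w w = -(1 / 2) * ∫ x, divergence v x * ∑ i, w x i ^ 2 := by
  have hwi := contDiff_pi.1 hw
  have hpointwise (x : EuclideanSpace ℝ (Fin 2)) :
      ∑ i, ∑ j, v x j * pd (fun y => w y i) j x * w x i =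
        1 / 2 * ∑ j, v x j * pd (fun y => ∑ i, w y i ^ 2) j x := by
    simp only [pd_sum_sq (f := fun i y => w y i) fun i => (hwi i).differentiable one_ne_zero x]
    simp only [Fin.sum_univ_two]
    ring
  have hparts := integral_sum_mul_pd_eq_neg_integral_divergence_mul hv
    (ContDiff.sum fun i _ => (hwi i).pow 2)
    (hc.comp_left (g := fun z : Fin 2 → ℝ => ∑ i, z i ^ 2) (by simp))
  simp only [triFormA, hpointwise]
  rw [integral_const_mul, hparts]
  ring

theorem integrable_triFormA_integrand (hu : Continuous u) (hv : ContDiff ℝ 1 v)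
    (hw : Continuous w) (hc : HasCompactSupport w) :
    Integrable fun x => ∑ i, ∑ j, u x j * pd (fun y => v y i) j x * w x i := by
  refine integrable_finsetSum _ fun i _ => integrable_finsetSum _ fun j _ => ?_
  refine Continuous.integrable_of_hasCompactSupport ?_
    (hc.comp_left (g := fun z : Fin 2 → ℝ => z i) (Pi.zero_apply i)).mul_left
  exact ((continuous_pi_iff.1 hu j).mul (continuous_pd (contDiff_pi.1 hv i) j)).mul
    (continuous_pi_iff.1 hw i)

theorem triFormA_self_sub_triFormA_self (hu : ContDiff ℝ 1 u) (hv : ContDiff ℝ 1 v)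
    (hw : Continuous w) (hc : HasCompactSupport w) :
    triFormA u u w - triFormA v v w =
      triFormA (fun x => u x - v x) u w + triFormA v (fun x => u x - v x) w := by
  have hpd (i j : Fin 2) (x : EuclideanSpace ℝ (Fin 2)) :
      pd (fun y => u y i - v y i) j x = pd (fun y => u y i) j x - pd (fun y => v y i) j x := by
    rw [pd, fderiv_fun_sub ((contDiff_pi.1 hu i).differentiable one_ne_zero x)
      ((contDiff_pi.1 hv i).differentiable one_ne_zero x)]
    rfl
  have huv := hu.sub hv
  simp only [triFormA]
  rw [← integral_sub (integrable_triFormA_integrand hu.continuous hu hw hc)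
      (integrable_triFormA_integrand hv.continuous hv hw hc),
    ← integral_add (integrable_triFormA_integrand huv.continuous hu hw hc)
      (integrable_triFormA_integrand hv.continuous huv hw hc)]
  congr 1 with x
  simp only [Pi.sub_apply, hpd, ← Finset.sum_sub_distrib, ← Finset.sum_add_distrib]
  congr! 2
  ring

theorem triFormA_self_sub_triFormA_self_of_divergence_eq_zero (hu : ContDiff ℝ 1 u)
    (hv : ContDiff ℝ 1 v) (hc : HasCompactSupport fun x => u x - v x)
    (hdiv : ∀ x, divergence v x = 0) :
    triFormA u u (fun x => u x - v x) - triFormA v v (fun x => u x - v x) =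
      triFormA (fun x => u x - v x) u (fun x => u x - v x) := by
  rw [triFormA_self_sub_triFormA_self hu hv (hu.sub hv).continuous hc,
    triFormA_self_eq_integral_divergence hv (hu.sub hv) hc]
  simp [hdiv]

theorem abs_sum_sum_mul_mul_le {m n : Type*} [Fintype m] [Fintype n] (A : m → n → ℝ)
    (a : n → ℝ) (b : m → ℝ) :
    |∑ i, ∑ j, a j * A i j * b i| ≤
      √(∑ j, a j ^ 2) * √(∑ i, b i ^ 2) * √(∑ i, ∑ j, A i j ^ 2) := by
  have h := Finset.sum_mul_sq_le_sq_mul_sq Finset.univ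
    (fun p : m × n => a p.2 * b p.1) fun p => A p.1 p.2
  simp only [Fintype.sum_prod_type_right, mul_pow, ← Finset.mul_sum, ← Finset.sum_mul] at h
  rw [← Real.sqrt_mul (by positivity), ← Real.sqrt_mul (by positivity), Finset.sum_comm,
    Finset.sum_comm (f := fun i j => A i j ^ 2)]
  simpa only [mul_right_comm] using Real.abs_le_sqrt h

theorem sum_sq_pd_eq_norm_sq_fderiv {x : EuclideanSpace ℝ (Fin 2)} (hw : DifferentiableAt ℝ w x)
    (j : Fin 2) :
    ∑ i, pd (fun y => w y i) j x ^ 2 =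
      ‖fderiv ℝ (fun y => WithLp.toLp 2 (w y)) x (EuclideanSpace.single j 1)‖ ^ 2 := by
  have hderiv : HasFDerivAt (fun y => WithLp.toLp 2 (w y)) _ x :=
    (PiLp.hasFDerivAt_toLp 2 (w x)).comp x hw.hasFDerivAt
  rw [hderiv.fderiv, EuclideanSpace.real_norm_sq_eq]
  refine Finset.sum_congr rfl fun i _ => ?_
  rw [pd, (hasFDerivAt_pi'.1 hw.hasFDerivAt i).fderiv]
  rfl

theorem dirichletNorm_sq (w : EuclideanSpace ℝ (Fin 2) → Fin 2 → ℝ) :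
    dirichletNorm w ^ 2 = ∫ x, ∑ i, ∑ j, pd (fun y => w y i) j x ^ 2 :=
  Real.sq_sqrt (integral_nonneg fun x => by positivity)

theorem dirichletNorm_sq_eq_sum_integral_norm_sq_fderiv (hw : ContDiff ℝ 1 w)
    (hc : HasCompactSupport w) :
    dirichletNorm w ^ 2 = ∑ j, ∫ x,
      ‖fderiv ℝ (fun y => WithLp.toLp 2 (w y)) x (EuclideanSpace.single j 1)‖ ^ 2 := by
  have hLp : ContDiff ℝ 1 fun y => WithLp.toLp 2 (w y) := (PiLp.contDiff_toLp).comp hw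
  have hLpc : HasCompactSupport fun y => WithLp.toLp 2 (w y) := hc.comp_left rfl
  rw [dirichletNorm_sq, ← integral_finsetSum _ fun j _ =>
    (memLp_fderiv_apply hLp hLpc 2 _).integrable_norm_pow two_ne_zero]
  congr 1 with x
  rw [Finset.sum_comm]
  exact Finset.sum_congr rfl fun j _ =>
    sum_sq_pd_eq_norm_sq_fderiv (hw.differentiable one_ne_zero x) j

theorem integral_norm_toLp_pow_four_le (hw : ContDiff ℝ 1 w) (hc : HasCompactSupport w)
    {s : Set (EuclideanSpace ℝ (Fin 2))} (hs : volume s ≠ ⊤) (hsupp : tsupport w ⊆ s) :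
    ∫ x, ‖WithLp.toLp 2 (w x)‖ ^ 4 ≤ volume.real s / 16 * (dirichletNorm w ^ 2) ^ 2 := by
  rw [dirichletNorm_sq_eq_sum_integral_norm_sq_fderiv hw hc]
  exact integral_norm_pow_four_le_measureReal_mul (PiLp.contDiff_toLp.comp hw) (hc.comp_left rfl)
    hs ((tsupport_comp_subset rfl w).trans hsupp)

theorem integrable_sum_sq_pd (hu : ContDiff ℝ 1 u) (hc : HasCompactSupport u) :
    Integrable fun x => ∑ i, ∑ j, pd (fun y => u y i) j x ^ 2 :=
  integrable_finsetSum _ fun i _ => integrable_finsetSum _ fun _ _ =>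
    (memLp_fderiv_apply (contDiff_pi.1 hu i)
      (hc.comp_left (g := fun z : Fin 2 → ℝ => z i) (Pi.zero_apply i)) 2 _).integrable_sq

theorem abs_triFormA_le (hu : ContDiff ℝ 1 u)
    (hgrad : Integrable fun x => ∑ i, ∑ j, pd (fun y => u y i) j x ^ 2)
    (hw : Continuous w) (hc : HasCompactSupport w) :
    |triFormA w u w| ≤ √(∫ x, ‖WithLp.toLp 2 (w x)‖ ^ 4) * dirichletNorm u := by
  set N : EuclideanSpace ℝ (Fin 2) → ℝ := fun x => √(∑ i, ∑ j, pd (fun y => u y i) j x ^ 2)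
  have hN : Continuous N := (continuous_finsetSum _ fun i _ => continuous_finsetSum _ fun j _ =>
    (continuous_pd (contDiff_pi.1 hu i) j).pow 2).sqrt
  have hNsq (x : EuclideanSpace ℝ (Fin 2)) :
      N x ^ 2 = ∑ i, ∑ j, pd (fun y => u y i) j x ^ 2 := Real.sq_sqrt (by positivity)
  have hN₂ : MemLp N 2 :=
    (memLp_two_iff_integrable_sq hN.aestronglyMeasurable).2 (by simpa only [hNsq] using hgrad)
  have hw₂ : MemLp (fun x => ‖WithLp.toLp 2 (w x)‖ ^ 2) 2 :=
    (by fun_prop : Continuous fun x => ‖WithLp.toLp 2 (w x)‖ ^ 2).memLp_of_hasCompactSupport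
      (hc.comp_left (g := fun z => ‖WithLp.toLp 2 z‖ ^ 2) (by simp))
  have hpointwise (x : EuclideanSpace ℝ (Fin 2)) :
      |∑ i, ∑ j, w x j * pd (fun y => u y i) j x * w x i| ≤
        ‖‖WithLp.toLp 2 (w x)‖ ^ 2‖ * ‖N x‖ := by
    refine (abs_sum_sum_mul_mul_le (fun i j => pd (fun y => u y i) j x) (w x) (w x)).trans_eq ?_
    rw [Real.norm_of_nonneg (by positivity), Real.norm_of_nonneg (Real.sqrt_nonneg _),
      EuclideanSpace.real_norm_sq_eq, Real.mul_self_sqrt (by positivity)]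
  have hint : Integrable fun x => ‖‖WithLp.toLp 2 (w x)‖ ^ 2‖ * ‖N x‖ :=
    hw₂.norm.integrable_mul hN₂.norm
  calc |triFormA w u w|
      ≤ ∫ x, ‖‖WithLp.toLp 2 (w x)‖ ^ 2‖ * ‖N x‖ := by
        rw [triFormA, ← Real.norm_eq_abs]
        exact norm_integral_le_of_norm_le hint (.of_forall hpointwise)
    _ ≤ √(∫ x, ‖‖WithLp.toLp 2 (w x)‖ ^ 2‖ ^ 2) * √(∫ x, ‖N x‖ ^ 2) :=
        integral_norm_mul_norm_le_sqrt_mul_sqrt hw₂ hN₂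
    _ = √(∫ x, ‖WithLp.toLp 2 (w x)‖ ^ 4) * dirichletNorm u := by
        simp [hNsq, dirichletNorm, ← pow_mul]

end TrilinearForm

theorem triFormA_diff_bound_divFree_general {G : Set (EuclideanSpace ℝ (Fin 2))}
    (hG : volume G ≠ ⊤) {u v : EuclideanSpace ℝ (Fin 2) → Fin 2 → ℝ}
    (hu : ContDiff ℝ 1 u) (hv : ContDiff ℝ 1 v)
    (hgrad : Integrable fun x => ∑ i, ∑ j, pd (fun y => u y i) j x ^ 2)
    (hc : HasCompactSupport fun x => u x - v x) (hsupp : tsupport (fun x => u x - v x) ⊆ G)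
    (hdiv : ∀ x, divergence v x = 0) :
    |triFormA u u (fun x => u x - v x) - triFormA v v (fun x => u x - v x)| ≤
      √(volume G).toReal / 4 * dirichletNorm (fun x => u x - v x) ^ 2 * dirichletNorm u := by
  have hw : ContDiff ℝ 1 fun x => u x - v x := hu.sub hv
  set w := fun x => u x - v x
  have hL4 : √(∫ x, ‖WithLp.toLp 2 (w x)‖ ^ 4) ≤
      √(volume G).toReal / 4 * dirichletNorm w ^ 2 := by
    refine Real.sqrt_le_iff.2 ⟨by positivity, ?_⟩
    refine (integral_norm_toLp_pow_four_le hw hc hG hsupp).trans_eq ?_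
    rw [mul_pow, div_pow, Real.sq_sqrt ENNReal.toReal_nonneg, Measure.real]
    norm_num
  rw [triFormA_self_sub_triFormA_self_of_divergence_eq_zero hu hv hc hdiv]
  calc |triFormA w u w|
      ≤ √(∫ x, ‖WithLp.toLp 2 (w x)‖ ^ 4) * dirichletNorm u :=
        abs_triFormA_le hu hgrad hw.continuous hc
    _ ≤ √(volume G).toReal / 4 * dirichletNorm w ^ 2 * dirichletNorm u :=
        mul_le_mul_of_nonneg_right hL4 (Real.sqrt_nonneg _)

/-- If `div v = 0` then
`|𝔞(u,u,u−v) − 𝔞(v,v,u−v)| ≤ (√|G|/2)·|u−v|_{1,2}²·|u|_{1,2}`. -/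
theorem triFormA_diff_bound_divFree
    (G : Set (EuclideanSpace ℝ (Fin 2)))
    (hGmeas : MeasurableSet G) (hGbdd : Bornology.IsBounded G)
    (u v : EuclideanSpace ℝ (Fin 2) → Fin 2 → ℝ)
    (hu : ContDiff ℝ (⊤ : ℕ∞) u) (hv : ContDiff ℝ (⊤ : ℕ∞) v)
    (husupp : HasCompactSupport u) (hvsupp : HasCompactSupport v)
    (huG : tsupport u ⊆ G) (hvG : tsupport v ⊆ G)
    (hdiv : ∀ x, divergence v x = 0) :
    |triFormA u u (fun x => u x - v x) - triFormA v v (fun x => u x - v x)| ≤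
      Real.sqrt (volume G).toReal / 2 *
        dirichletNorm (fun x => u x - v x) ^ 2 * dirichletNorm u := by
  have hu₁ : ContDiff ℝ 1 u := hu.of_le (by exact_mod_cast le_top)
  have hv₁ : ContDiff ℝ 1 v := hv.of_le (by exact_mod_cast le_top)
  refine (triFormA_diff_bound_divFree_general hGbdd.measure_lt_top.ne hu₁ hv₁
    (integrable_sum_sq_pd hu₁ husupp) (husupp.sub hvsupp)
    ((tsupport_sub u v).trans (Set.union_subset huG hvG)) hdiv).trans ?_
  have hnorm : 0 ≤ dirichletNorm u := Real.sqrt_nonneg _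
  gcongr
  norm_num
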